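/- arXiv:1212.2264 — 2 statements merged into one kernel-verified Lean document; each statement's English description precedes it below -/
import Mathlib

section
/- Let G have m edges, W ≥ m wedges, and let S be a fixed set of wedges. Let X count wedges of S formed by s i.i.d. uniform random edges, where s ≥ m/√W. Then Var[X] ≤ 18 s³ W^{3/2} / m³. -/
open Finset

/-- Averaging out one coordinate. -/
lemma wv_resample {E : Type*} [Fintype E] {k : ℕ} (F : (Fin k → E) → ℝ) (i : Fin k) :
    ∑ r : Fin k → E, ∑ e : E, F (Function.update r i e)
      = (Fintype.card E : ℝ) * ∑ r : Fin k → E, F r := by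
  have h1 : ∑ r : Fin k → E, ∑ e : E, F (Function.update r i e)
      = ∑ x : (Fin k → E) × E, F (Function.update x.1 i x.2) := by
    rw [Fintype.sum_prod_type]
  have h2 : Function.Involutive
      (fun x : (Fin k → E) × E => (Function.update x.1 i x.2, x.1 i)) := by
    rintro ⟨r, e⟩
    simp
  have h3 := Equiv.sum_comp h2.toPerm (fun x : (Fin k → E) × E => F x.1)
  rw [h1]
  simp only [Function.Involutive.coe_toPerm] at h3
  rw [h3, Fintype.sum_prod_type]
  simp [Finset.mul_sum]

/-- Uniform expectation. -/
noncomputable def wvEx {E : Type*} [Fintype E] {k : ℕ} (F : (Fin k → E) → ℝ) : ℝ :=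
  (∑ r : Fin k → E, F r) / (Fintype.card E : ℝ) ^ k

lemma wvEx_resample {E : Type*} [Fintype E] [Nonempty E] {k : ℕ} (F : (Fin k → E) → ℝ)
    (i : Fin k) (H : (Fin k → E) → ℝ)
    (hH : ∀ r, ∑ e : E, F (Function.update r i e) = H r) :
    wvEx F = wvEx H / (Fintype.card E : ℝ) := by
  have h := wv_resample F i
  simp only [hH] at h
  have hc : (Fintype.card E : ℝ) ≠ 0 := by simp
  unfold wvEx
  rw [h]
  field_simp

lemma wvEx_const {E : Type*} [Fintype E] [Nonempty E] {k : ℕ} (c : ℝ) :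
    wvEx (fun _ : Fin k → E => c) = c := by
  have hc : (Fintype.card E : ℝ) ≠ 0 := by simp
  unfold wvEx
  simp

lemma wvEx_pair {E : Type*} [Fintype E] [Nonempty E] {k : ℕ} (A : E → E → ℝ)
    (i j : Fin k) (hij : i ≠ j) :
    wvEx (fun r : Fin k → E => A (r i) (r j))
      = (∑ e, ∑ f, A e f) / (Fintype.card E : ℝ) ^ 2 := by
  rw [wvEx_resample _ j (fun r => ∑ f, A (r i) f) (by intro r; simp [hij]),
    wvEx_resample _ i (fun r => ∑ e, ∑ f, A e f) (by intro r; simp), wvEx_const]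
  rw [div_div, sq]

lemma wvEx_shared {E : Type*} [Fintype E] [Nonempty E] {k : ℕ} (A : E → E → ℝ)
    (i j l : Fin k) (hij : i ≠ j) (hil : i ≠ l) (hjl : j ≠ l) :
    wvEx (fun r : Fin k → E => A (r i) (r j) * A (r i) (r l))
      = (∑ e, (∑ f, A e f) ^ 2) / (Fintype.card E : ℝ) ^ 3 := by
  rw [wvEx_resample _ j (fun r => (∑ f, A (r i) f) * A (r i) (r l))
      (by intro r; simp [hij, hjl.symm, Finset.sum_mul]),
    wvEx_resample _ l (fun r => (∑ f, A (r i) f) ^ 2)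
      (by intro r; simp [hil, ← Finset.mul_sum, sq]),
    wvEx_resample _ i (fun r => ∑ e, (∑ f, A e f) ^ 2) (by intro r; simp), wvEx_const]
  rw [div_div, div_div]; ring

lemma wvEx_disj {E : Type*} [Fintype E] [Nonempty E] {k : ℕ} (A : E → E → ℝ)
    (i j l n : Fin k) (hij : i ≠ j) (hil : i ≠ l) (hin : i ≠ n) (hjl : j ≠ l) (hjn : j ≠ n)
    (hln : l ≠ n) :
    wvEx (fun r : Fin k → E => A (r i) (r j) * A (r l) (r n))
      = ((∑ e, ∑ f, A e f) / (Fintype.card E : ℝ) ^ 2) ^ 2 := by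
  rw [wvEx_resample _ j (fun r => (∑ f, A (r i) f) * A (r l) (r n))
      (by intro r; simp [hij, hjl.symm, hjn.symm, Finset.sum_mul]),
    wvEx_resample _ i (fun r => (∑ e, ∑ f, A e f) * A (r l) (r n))
      (by intro r; simp [hil.symm, hin.symm, Finset.sum_mul]),
    wvEx_resample _ n (fun r => (∑ e, ∑ f, A e f) * (∑ f, A (r l) f))
      (by intro r; simp [hln, ← Finset.mul_sum]),
    wvEx_resample _ l (fun r => (∑ e, ∑ f, A e f) * (∑ e, ∑ f, A e f))
      (by intro r; simp [← Finset.mul_sum]), wvEx_const]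
  rw [div_div, div_div, div_div, div_pow]; ring

lemma wvEx_sum {E : Type*} [Fintype E] {k : ℕ} {ι : Type*} (s : Finset ι)
    (F : ι → (Fin k → E) → ℝ) :
    wvEx (fun r => ∑ p ∈ s, F p r) = ∑ p ∈ s, wvEx (F p) := by
  unfold wvEx
  rw [Finset.sum_comm, Finset.sum_div]

lemma wv_cov {E : Type*} [Fintype E] [Nonempty E] {k : ℕ} (A : E → E → ℝ)
    (hsymm : ∀ e f, A e f = A f e) (hnn : ∀ e f, 0 ≤ A e f) (hid : ∀ e f, A e f * A e f = A e f)
    (i j l n : Fin k) (hij : i ≠ j) (hln : l ≠ n) :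
    wvEx (fun r : Fin k → E => A (r i) (r j) * A (r l) (r n))
      - wvEx (fun r : Fin k → E => A (r i) (r j)) * wvEx (fun r : Fin k → E => A (r l) (r n))
    ≤ ((if i = l then 1 else 0) + (if i = n then 1 else 0) + (if j = l then 1 else 0)
        + (if j = n then 1 else 0)) *
          ((∑ e, (∑ f, A e f) ^ 2) / (Fintype.card E : ℝ) ^ 3)
      + ((if i = l then 1 else 0) * (if j = n then 1 else 0)
        + (if i = n then 1 else 0) * (if j = l then 1 else 0)) *
          ((∑ e, ∑ f, A e f) / (Fintype.card E : ℝ) ^ 2) := by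
  rw [wvEx_pair A i j hij, wvEx_pair A l n hln]
  have hT : 0 ≤ (∑ e, ∑ f, A e f) / (Fintype.card E : ℝ) ^ 2 := by
    have : 0 ≤ ∑ e, ∑ f, A e f := Finset.sum_nonneg fun e _ => Finset.sum_nonneg fun f _ => hnn e f
    positivity
  have hQ : 0 ≤ (∑ e, (∑ f, A e f) ^ 2) / (Fintype.card E : ℝ) ^ 3 := by positivity
  have hTT := mul_self_nonneg ((∑ e, ∑ f, A e f) / (Fintype.card E : ℝ) ^ 2)
  by_cases h1 : i = l
  · subst h1
    by_cases h2 : j = n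
    · subst h2
      simp only [hid]
      rw [wvEx_pair A i j hij]
      simp [hij, hij.symm]
      nlinarith
    · rw [wvEx_shared A i j n hij hln h2]
      simp [hij.symm, hln, h2]
      nlinarith
  · by_cases h2 : i = n
    · subst h2
      have : (fun r : Fin k → E => A (r i) (r j) * A (r l) (r i))
        = (fun r : Fin k → E => A (r i) (r j) * A (r i) (r l)) := by
        funext r; rw [hsymm (r l)]
      rw [this]
      by_cases h3 : j = l
      · subst h3
        simp only [hid]
        rw [wvEx_pair A i j hij]
        simp [hij, hij.symm]
        nlinarith
      · rw [wvEx_shared A i j l hij h1 h3]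
        simp [h1, hij.symm, h3]
        nlinarith
    · by_cases h3 : j = l
      · subst h3
        have : (fun r : Fin k → E => A (r i) (r j) * A (r j) (r n))
          = (fun r : Fin k → E => A (r j) (r i) * A (r j) (r n)) := by
          funext r; rw [hsymm (r i)]
        rw [this, wvEx_shared A j i n hij.symm hln h2]
        simp [h1, h2, hln]
        nlinarith
      · by_cases h4 : j = n
        · subst h4
          have : (fun r : Fin k → E => A (r i) (r j) * A (r l) (r j))
            = (fun r : Fin k → E => A (r j) (r i) * A (r j) (r l)) := by
            funext r; rw [hsymm (r i), hsymm (r l)]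
          rw [this, wvEx_shared A j i l hij.symm h3 h1]
          simp [h1, h2, h3]
          nlinarith
        · rw [wvEx_disj A i j l n hij h1 h2 h3 h4 hln]
          simp [h1, h2, h3, h4]
          nlinarith

/-- variance bound for the symmetrized count -/
lemma wv_var {E : Type*} [Fintype E] [Nonempty E] {k : ℕ} (A : E → E → ℝ)
    (hsymm : ∀ e f, A e f = A f e) (hnn : ∀ e f, 0 ≤ A e f)
    (hid : ∀ e f, A e f * A e f = A e f) :
    wvEx (fun r : Fin k → E =>
        (∑ p ∈ (univ : Finset (Fin k)).offDiag, A (r p.1) (r p.2)) ^ 2)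
      - (wvEx (fun r : Fin k → E =>
        (∑ p ∈ (univ : Finset (Fin k)).offDiag, A (r p.1) (r p.2)))) ^ 2
    ≤ 4 * (k : ℝ) ^ 3 * ((∑ e, (∑ f, A e f) ^ 2) / (Fintype.card E : ℝ) ^ 3)
      + 2 * (k : ℝ) ^ 2 * ((∑ e, ∑ f, A e f) / (Fintype.card E : ℝ) ^ 2) := by
  have hT : 0 ≤ (∑ e, ∑ f, A e f) / (Fintype.card E : ℝ) ^ 2 := by
    have : 0 ≤ ∑ e, ∑ f, A e f := Finset.sum_nonneg fun e _ => Finset.sum_nonneg fun f _ => hnn e f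
    positivity
  have hQ : 0 ≤ (∑ e, (∑ f, A e f) ^ 2) / (Fintype.card E : ℝ) ^ 3 := by positivity
  simp only [sq (∑ p ∈ (univ : Finset (Fin k)).offDiag, _), Finset.sum_mul_sum]
  rw [wvEx_sum]
  simp only [wvEx_sum]
  rw [sq, Finset.sum_mul_sum, ← Finset.sum_sub_distrib]
  simp only [← Finset.sum_sub_distrib]
  set Q := (∑ e, (∑ f, A e f) ^ 2) / (Fintype.card E : ℝ) ^ 3 with hQd
  set T := (∑ e, ∑ f, A e f) / (Fintype.card E : ℝ) ^ 2 with hTd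
  let b : Fin k → Fin k → Fin k → Fin k → ℝ := fun i j l n =>
    ((if i = l then 1 else 0) + (if i = n then 1 else 0) + (if j = l then 1 else 0)
        + (if j = n then 1 else 0)) * Q
      + ((if i = l then 1 else 0) * (if j = n then 1 else 0)
        + (if i = n then 1 else 0) * (if j = l then 1 else 0)) * T
  have hb : ∀ i j l n, 0 ≤ b i j l n := by
    intro i j l n
    have h01 : ∀ x y : Fin k, (0:ℝ) ≤ if x = y then 1 else 0 := by
      intro x y; split_ifs <;> norm_num
    have a1 := h01 i l
    have a2 := h01 i n
    have a3 := h01 j l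
    have a4 := h01 j n
    simp only [b]
    positivity
  calc _ ≤ ∑ p ∈ (univ : Finset (Fin k)).offDiag, ∑ q ∈ (univ : Finset (Fin k)).offDiag,
        b p.1 p.2 q.1 q.2 := by
        refine Finset.sum_le_sum fun p hp => Finset.sum_le_sum fun q hq => ?_
        simp only [Finset.mem_offDiag, mem_univ, true_and] at hp hq
        exact wv_cov A hsymm hnn hid p.1 p.2 q.1 q.2 hp hq
    _ ≤ ∑ p : Fin k × Fin k, ∑ q : Fin k × Fin k, b p.1 p.2 q.1 q.2 := by
        refine (Finset.sum_le_sum fun p hp => Finset.sum_le_sum_of_subset_of_nonneg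
          (Finset.subset_univ _) fun _ _ _ => hb _ _ _ _).trans ?_
        exact Finset.sum_le_sum_of_subset_of_nonneg
          (Finset.subset_univ _) fun _ _ _ => Finset.sum_nonneg fun _ _ => hb _ _ _ _
    _ = _ := by
        simp only [Fintype.sum_prod_type, b, add_mul, Finset.sum_add_distrib, ← Finset.sum_mul]
        simp [apply_ite Finset.card, Nat.cast_ite]
        ring

lemma wv_half {E : Type*} {k : ℕ} (A : E → E → ℝ)
    (hsymm : ∀ e f, A e f = A f e) (r : Fin k → E) :
    ∑ p ∈ (univ : Finset (Fin k)).offDiag, A (r p.1) (r p.2)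
      = 2 * ∑ p ∈ (univ : Finset (Fin k × Fin k)).filter (fun p => p.1 < p.2),
        A (r p.1) (r p.2) := by
  have h : (univ : Finset (Fin k)).offDiag
     = (univ : Finset (Fin k × Fin k)).filter (fun p => p.1 < p.2)
      ∪ (univ : Finset (Fin k × Fin k)).filter (fun p => p.2 < p.1) := by
    ext p; simp
  rw [h, Finset.sum_union, two_mul]
  · congr 1
    refine Finset.sum_bij' (fun p _ => p.swap) (fun p _ => p.swap) ?_ ?_ ?_ ?_ ?_ <;>
      simp
    intros; exact hsymm _ _
  · rw [Finset.disjoint_left]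
    intro p; simp; intro h; exact h.le

section graph
variable {V : Type*} [Fintype V] [DecidableEq V] (G : SimpleGraph V) [DecidableRel G.Adj]

lemma wv_deg (v : V) : ∑ e : G.edgeFinset, (if v ∈ (e : Sym2 V) then (1:ℝ) else 0)
    = G.degree v := by
  rw [Finset.sum_coe_sort G.edgeFinset (fun e => if v ∈ e then (1:ℝ) else 0),
    Finset.sum_boole, ← G.card_incidenceFinset_eq_degree, G.incidenceFinset_eq_filter]

lemma wv_two (e : G.edgeFinset) : ∑ v : V, (if v ∈ (e : Sym2 V) then (1:ℝ) else 0) = 2 := by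
  obtain ⟨e, he⟩ := e
  induction e with | _ a b =>
  have hab : a ≠ b := by
    simp at he; exact he.ne
  rw [Finset.sum_boole]
  have : (univ.filter (fun v => v ∈ s(a,b))) = {a, b} := by ext; simp
  simp only [this]
  rw [Finset.card_pair hab]; norm_num

lemma wv_sq (m W : ℕ) (hm : m = G.edgeFinset.card)
    (hW : W = ∑ v : V, (G.degree v).choose 2) :
    ∑ v : V, (G.degree v : ℝ) ^ 2 = 2 * W + 2 * m := by
  have h := G.sum_degrees_eq_twice_card_edges
  rw [← hm] at h
  have h' : ∑ v : V, (G.degree v : ℝ) = 2 * m := by exact_mod_cast h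
  rw [← h', hW]
  push_cast
  rw [Finset.mul_sum, ← Finset.sum_add_distrib]
  refine Finset.sum_congr rfl fun v _ => ?_
  rw [Nat.cast_choose_two]; ring

lemma wv_cube : ∑ v : V, (G.degree v : ℝ) ^ 3
    ≤ (∑ v : V, (G.degree v : ℝ) ^ 2) * Real.sqrt (∑ v : V, (G.degree v : ℝ) ^ 2) := by
  rw [Finset.sum_mul]
  refine Finset.sum_le_sum fun v _ => ?_
  rw [pow_succ]
  refine mul_le_mul_of_nonneg_left ?_ (by positivity)
  apply Real.le_sqrt_of_sq_le
  exact Finset.single_le_sum (f := fun v => (G.degree v : ℝ)^2) (fun _ _ => by positivity)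
    (mem_univ v)

lemma wv_T (W : ℕ) (hW : W = ∑ v : V, (G.degree v).choose 2)
    (A : G.edgeFinset → G.edgeFinset → ℝ)
    (hA : ∀ e f, A e f ≤ ∑ v : V, (if v ∈ (e : Sym2 V) then (1:ℝ) else 0) *
      (if v ∈ (f : Sym2 V) then (1:ℝ) else 0)) (hd : ∀ e, A e e = 0) :
    ∑ e, ∑ f, A e f ≤ 2 * W := by
  have h1 : ∀ e f, A e f ≤ ∑ v : V, ((if v ∈ (e : Sym2 V) then (1:ℝ) else 0) *
      (if v ∈ (f : Sym2 V) then (1:ℝ) else 0)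
        - (if e = f then (if v ∈ (e : Sym2 V) then (1:ℝ) else 0) else 0)) := by
    intro e f
    by_cases h : e = f
    · subst h
      rw [hd]
      refine Finset.sum_nonneg fun v _ => ?_
      split_ifs <;> norm_num
    · simpa [h] using hA e f
  refine (Finset.sum_le_sum fun e _ => Finset.sum_le_sum fun f _ => h1 e f).trans (le_of_eq ?_)
  have h2 : ∀ e : G.edgeFinset, ∑ f : G.edgeFinset, ∑ v : V,
     ((if v ∈ (e : Sym2 V) then (1:ℝ) else 0) *
      (if v ∈ (f : Sym2 V) then (1:ℝ) else 0)
        - (if e = f then (if v ∈ (e : Sym2 V) then (1:ℝ) else 0) else 0))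
      = ∑ v : V, ((if v ∈ (e : Sym2 V) then (1:ℝ) else 0) * G.degree v -
        (if v ∈ (e : Sym2 V) then (1:ℝ) else 0)) := by
    intro e
    rw [Finset.sum_comm]
    refine Finset.sum_congr rfl fun v _ => ?_
    rw [Finset.sum_sub_distrib, ← Finset.mul_sum, wv_deg]
    simp only [Finset.sum_ite_eq, Finset.mem_univ, if_true]
  simp only [h2]
  rw [Finset.sum_comm, hW]
  push_cast
  rw [Finset.mul_sum]
  refine Finset.sum_congr rfl fun v _ => ?_
  rw [Finset.sum_sub_distrib, ← Finset.sum_mul, wv_deg, Nat.cast_choose_two]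
  ring

lemma wv_Q (A : G.edgeFinset → G.edgeFinset → ℝ) (hnn : ∀ e f, 0 ≤ A e f)
    (hA : ∀ e f, A e f ≤ ∑ v : V, (if v ∈ (e : Sym2 V) then (1:ℝ) else 0) *
      (if v ∈ (f : Sym2 V) then (1:ℝ) else 0)) :
    ∑ e, (∑ f, A e f) ^ 2 ≤ 2 * ∑ v : V, (G.degree v : ℝ) ^ 3 := by
  have h1 : ∀ e, (∑ f, A e f) ^ 2 ≤
      2 * ∑ v : V, (if v ∈ (e : Sym2 V) then (1:ℝ) else 0) * (G.degree v : ℝ) ^ 2 := by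
    intro e
    have h2 : ∑ f, A e f ≤ ∑ v : V, (if v ∈ (e : Sym2 V) then (1:ℝ) else 0) * G.degree v := by
      refine (Finset.sum_le_sum fun f _ => hA e f).trans (le_of_eq ?_)
      rw [Finset.sum_comm]
      refine Finset.sum_congr rfl fun v _ => ?_
      rw [← Finset.mul_sum, wv_deg]
    refine (pow_le_pow_left₀ (Finset.sum_nonneg fun f _ => hnn e f) h2 2).trans ?_
    have h3 := Finset.sum_mul_sq_le_sq_mul_sq (univ : Finset V)
      (fun v => (if v ∈ (e : Sym2 V) then (1:ℝ) else 0))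
      (fun v => (if v ∈ (e : Sym2 V) then (1:ℝ) else 0) * (G.degree v : ℝ))
    have h4 : ∀ v : V, (if v ∈ (e : Sym2 V) then (1:ℝ) else 0) ^ 2
      = (if v ∈ (e : Sym2 V) then (1:ℝ) else 0) := by
      intro v; split_ifs <;> norm_num
    simp only [← mul_assoc, ← sq, mul_pow, h4, wv_two] at h3
    exact h3
  refine (Finset.sum_le_sum fun e _ => h1 e).trans (le_of_eq ?_)
  rw [← Finset.mul_sum, Finset.sum_comm]
  congr 1
  refine Finset.sum_congr rfl fun v _ => ?_
  rw [← Finset.sum_mul, wv_deg]; ring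

end graph

/-- Variance bound: if `W ≥ m` and `k ≥ m/√W`, the number `X` of wedges of a fixed set
`S` formed by `k` i.i.d. uniform random edges satisfies `Var[X] ≤ 18 k³ W^{3/2}/m³`. -/
theorem variance_wedge_count_bound
    {V : Type*} [Fintype V] [DecidableEq V] (G : SimpleGraph V) [DecidableRel G.Adj]
    (m W : ℕ) (hm : m = G.edgeFinset.card) (hm0 : 0 < m)
    (hW : W = ∑ v : V, (G.degree v).choose 2) (hWm : m ≤ W)
    (S : Finset (Sym2 (Sym2 V)))
    (hS : ∀ w ∈ S, ¬ w.IsDiag ∧ (∀ e ∈ w, e ∈ G.edgeFinset) ∧ ∃ v : V, ∀ e ∈ w, v ∈ e)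
    (k : ℕ) (hk : (m : ℝ) / Real.sqrt W ≤ (k : ℝ)) :
    (∑ r : Fin k → G.edgeFinset,
        (((Finset.univ.filter (fun p : Fin k × Fin k =>
            p.1 < p.2 ∧ s((r p.1 : Sym2 V), (r p.2 : Sym2 V)) ∈ S)).card : ℝ)) ^ 2)
          / (m : ℝ) ^ k
      - ((∑ r : Fin k → G.edgeFinset,
          ((Finset.univ.filter (fun p : Fin k × Fin k =>
            p.1 < p.2 ∧ s((r p.1 : Sym2 V), (r p.2 : Sym2 V)) ∈ S)).card : ℝ))
          / (m : ℝ) ^ k) ^ 2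
      ≤ 18 * (k : ℝ) ^ 3 * (W : ℝ) ^ ((3 : ℝ) / 2) / (m : ℝ) ^ 3 := by
  classical
  have hcard : Fintype.card G.edgeFinset = m := by rw [hm, Fintype.card_coe]
  have : Nonempty G.edgeFinset := by
    rw [← Fintype.card_pos_iff, hcard]; exact hm0
  let A : G.edgeFinset → G.edgeFinset → ℝ := fun e f =>
    if s((e : Sym2 V), (f : Sym2 V)) ∈ S then 1 else 0
  have hsymm : ∀ e f, A e f = A f e := by
    intro e f; simp only [A, Sym2.eq_swap]
  have hnn : ∀ e f, 0 ≤ A e f := by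
    intro e f; simp only [A]; split_ifs <;> norm_num
  have hid : ∀ e f, A e f * A e f = A e f := by
    intro e f; simp only [A]; split_ifs <;> norm_num
  have hd : ∀ e, A e e = 0 := by
    intro e
    simp only [A]
    rw [if_neg]
    intro h
    exact (hS _ h).1 (by simp)
  have hA : ∀ e f, A e f ≤ ∑ v : V, (if v ∈ (e : Sym2 V) then (1:ℝ) else 0) *
      (if v ∈ (f : Sym2 V) then (1:ℝ) else 0) := by
    intro e f
    have hn : ∀ v ∈ (univ : Finset V), 0 ≤ (if v ∈ (e : Sym2 V) then (1:ℝ) else 0) *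
      (if v ∈ (f : Sym2 V) then (1:ℝ) else 0) := by
      intro v _; split_ifs <;> norm_num
    simp only [A]
    split_ifs with h
    · obtain ⟨v, hv⟩ := (hS _ h).2.2
      have h1 := hv e (by simp)
      have h2 := hv f (by simp)
      refine le_trans ?_ (Finset.single_le_sum hn (mem_univ v))
      simp [h1, h2]
    · exact Finset.sum_nonneg hn
  have hX : ∀ r : Fin k → G.edgeFinset, ((Finset.univ.filter (fun p : Fin k × Fin k =>
            p.1 < p.2 ∧ s((r p.1 : Sym2 V), (r p.2 : Sym2 V)) ∈ S)).card : ℝ)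
      = (1/2) * ∑ p ∈ (univ : Finset (Fin k)).offDiag, A (r p.1) (r p.2) := by
    intro r
    rw [wv_half A hsymm r, ← Finset.filter_filter, Finset.card_filter]
    push_cast
    ring
  simp only [hX, mul_pow, ← Finset.mul_sum]
  have hvar := wv_var (k := k) A hsymm hnn hid
  unfold wvEx at hvar
  rw [hcard] at hvar
  have hTb := wv_T G W hW A hA hd
  have hQb := wv_Q G A hnn hA
  have hsq := wv_sq G m W hm hW
  have hcube := wv_cube G
  have hmr : (0:ℝ) < m := by exact_mod_cast hm0
  have hWr : (m:ℝ) ≤ W := by exact_mod_cast hWm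
  have hWpos : (0:ℝ) < W := lt_of_lt_of_le hmr hWr
  set R := Real.sqrt W with hR
  have hRpos : 0 < R := Real.sqrt_pos.2 hWpos
  have hRR : R * R = W := Real.mul_self_sqrt hWpos.le
  have hpow : (W:ℝ) ^ ((3:ℝ)/2) = R ^ 3 := by
    rw [hR, Real.sqrt_eq_rpow, ← Real.rpow_natCast, ← Real.rpow_mul hWpos.le]; norm_num
  have hs4 : ∑ v : V, (G.degree v : ℝ) ^ 2 ≤ (2 * R) ^ 2 := by rw [hsq]; nlinarith
  have hsr : Real.sqrt (∑ v : V, (G.degree v : ℝ) ^ 2) ≤ 2 * R :=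
    Real.sqrt_le_iff.2 ⟨by positivity, hs4⟩
  have hc8 : ∑ v : V, (G.degree v : ℝ) ^ 3 ≤ 8 * R ^ 3 := by
    refine hcube.trans ((mul_le_mul hs4 hsr (Real.sqrt_nonneg _) (by positivity)).trans ?_)
    apply le_of_eq; ring
  have hQ16 : ∑ e, (∑ f, A e f) ^ 2 ≤ 16 * R ^ 3 := by linarith
  have hT2 : ∑ e, ∑ f, A e f ≤ 2 * R ^ 2 := by rw [sq, hRR]; exact hTb
  have hkm : (1:ℝ) ≤ k * R / m := by
    rw [div_le_iff₀ hRpos] at hk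
    rw [le_div_iff₀ hmr]; linarith
  have e1 : 4 * (k:ℝ)^3 * ((∑ e, (∑ f, A e f) ^ 2) / (m:ℝ)^3) ≤ 64 * (k * R / m) ^ 3 := by
    calc _ ≤ 4 * (k:ℝ)^3 * ((16 * R ^ 3) / (m:ℝ)^3) := by gcongr
      _ = _ := by rw [div_pow]; ring
  have e2 : 2 * (k:ℝ)^2 * ((∑ e, ∑ f, A e f) / (m:ℝ)^2) ≤ 4 * (k * R / m) ^ 2 := by
    calc _ ≤ 2 * (k:ℝ)^2 * ((2 * R ^ 2) / (m:ℝ)^2) := by gcongr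
      _ = _ := by rw [div_pow]; ring
  have e3 : (k * R / m) ^ 2 ≤ (k * R / m) ^ 3 := pow_le_pow_right₀ hkm (by norm_num)
  have e4 : (0:ℝ) ≤ (k * R / m) ^ 3 := by positivity
  have e5 : 18 * (k : ℝ) ^ 3 * (W : ℝ) ^ ((3 : ℝ) / 2) / (m : ℝ) ^ 3 = 18 * (k * R / m) ^ 3 := by
    rw [hpow, div_pow]; ring
  rw [e5]
  simp only [mul_div_assoc, mul_pow] at hvar e1 e2 e3 e4 ⊢
  linarith
end

section
/- Let X be a random variable counting wedges of a fixed set S formed by s i.i.d. uniform random edges of a graph G with m edges and W ≥ m wedges. For γ > 0, if s ≥ c′m/(γ³√W) for a sufficiently large absolute constant c′, then with probability at least 1 − γ, |X − E[X]| ≤ (γW/|S|)·E[X]. -/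
open Finset Classical

lemma wc_upd {E : Type*} [Fintype E] {k : ℕ} (i : Fin k) (φ : (Fin k → E) → ℝ) :
    ∑ r : Fin k → E, ∑ a : E, φ (Function.update r i a) = (Fintype.card E : ℝ) * ∑ r, φ r := by
  have h : ∑ x : (Fin k → E) × E, φ (Function.update x.1 i x.2)
      = ∑ x : (Fin k → E) × E, φ x.1 := by
    refine Finset.sum_nbij' (fun x => (Function.update x.1 i x.2, x.1 i))
      (fun x => (Function.update x.1 i x.2, x.1 i)) ?_ ?_ ?_ ?_ ?_ <;> simp
  rw [Fintype.sum_prod_type, Fintype.sum_prod_type] at h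
  rw [h]; simp [Finset.mul_sum]

lemma wc_avg1 {E : Type*} [Fintype E] {k : ℕ} (i : Fin k) (φ : E → (Fin k → E) → ℝ)
    (h : ∀ a b r, φ a (Function.update r i b) = φ a r) :
    (Fintype.card E : ℝ) * ∑ r, φ (r i) r = ∑ r : Fin k → E, ∑ a : E, φ a r := by
  rw [← wc_upd i]; simp [h]

lemma wc_avg2 {E : Type*} [Fintype E] {k : ℕ} (i j : Fin k) (hij : i ≠ j) (φ : E → E → ℝ) :
    (Fintype.card E : ℝ) ^ 2 * ∑ r : Fin k → E, φ (r i) (r j)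
      = (Fintype.card E : ℝ) ^ k * ∑ a, ∑ b, φ a b := by
  rw [pow_two, mul_assoc, wc_avg1 i (fun a r => φ a (r j)) (by simp [hij.symm])]
  rw [wc_avg1 j (fun b r => ∑ a, φ a b) (by simp)]
  rw [Finset.sum_comm (s := (univ : Finset E)) (t := (univ : Finset E))]
  simp

lemma wc_avg3 {E : Type*} [Fintype E] {k : ℕ} (i j l : Fin k) (hij : i ≠ j) (hil : i ≠ l)
    (hjl : j ≠ l) (φ : E → E → E → ℝ) :
    (Fintype.card E : ℝ) ^ 3 * ∑ r : Fin k → E, φ (r i) (r j) (r l)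
      = (Fintype.card E : ℝ) ^ k * ∑ a, ∑ b, ∑ c, φ a b c := by
  rw [pow_succ, mul_assoc, wc_avg1 i (fun a r => φ a (r j) (r l)) (by simp [hij.symm, hil.symm]),
    wc_avg2 j l hjl (fun b c => ∑ a, φ a b c)]
  congr 1
  conv_rhs => rw [Finset.sum_comm]
  refine Finset.sum_congr rfl fun b _ => ?_
  rw [Finset.sum_comm]

lemma wc_avg4 {E : Type*} [Fintype E] {k : ℕ} (i j l o : Fin k) (hij : i ≠ j) (hil : i ≠ l)
    (hio : i ≠ o) (hjl : j ≠ l) (hjo : j ≠ o) (hlo : l ≠ o) (φ : E → E → ℝ) :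
    (Fintype.card E : ℝ) ^ 4 * ∑ r : Fin k → E, φ (r i) (r j) * φ (r l) (r o)
      = (Fintype.card E : ℝ) ^ k * (∑ a, ∑ b, φ a b) ^ 2 := by
  rw [pow_succ, mul_assoc, wc_avg1 i (fun a r => φ a (r j) * φ (r l) (r o))
      (by simp [hij.symm, hil.symm, hio.symm]),
    wc_avg3 j l o hjl hjo hlo (fun b c d => ∑ a, φ a b * φ c d)]
  congr 1
  simp only [← Finset.sum_mul, ← Finset.mul_sum]
  rw [pow_two, Finset.sum_comm (s := (univ : Finset E)) (t := (univ : Finset E))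
    (f := fun b a => φ a b)]

lemma wc_card (k : ℕ) : ((univ : Finset (Fin k × Fin k)).filter (fun p => p.1 < p.2)).card
    = k.choose 2 := by
  rw [Finset.card_filter, Fintype.sum_prod_type_right]
  simp only [← Finset.card_filter]
  have : ∀ y : Fin k, (univ.filter (fun x => x < y)).card = (y : ℕ) := by
    intro y
    rw [← Fin.card_Iio]; congr 1; ext; simp
  simp only [this]
  rw [Fin.sum_univ_eq_sum_range (fun i => i), Finset.sum_range_id, Nat.choose_two_right]

/-- covariance bound -/
lemma wc_cov {E : Type*} [Fintype E] {k : ℕ} (f : E → E → ℝ) (hs : ∀ a b, f a b = f b a)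
    (h01 : ∀ a b, f a b = 0 ∨ f a b = 1) (hm : 0 < Fintype.card E) (q B : ℝ)
    (hq : q = (∑ a, ∑ b, f a b) / (Fintype.card E : ℝ) ^ 2)
    (hB : B = (∑ a, (∑ b, f a b) ^ 2) / (Fintype.card E : ℝ) ^ 3)
    (p p' : Fin k × Fin k) (hp : p.1 < p.2) (hp' : p'.1 < p'.2) :
    ∑ r : Fin k → E, (f (r p.1) (r p.2) - q) * (f (r p'.1) (r p'.2) - q) ≤
      (Fintype.card E : ℝ) ^ k * ((if p = p' then q else 0)
        + ((if p.1 = p'.1 then B else 0) + (if p.1 = p'.2 then B else 0)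
         + (if p.2 = p'.1 then B else 0) + (if p.2 = p'.2 then B else 0))) := by
  obtain ⟨i, j⟩ := p
  obtain ⟨l, o⟩ := p'
  simp only at hp hp' ⊢
  set M : ℝ := (Fintype.card E : ℝ) with hM
  have hM0 : 0 < M := by rw [hM]; exact_mod_cast hm
  have hf0 : ∀ a b, 0 ≤ f a b := fun a b => by rcases h01 a b with h | h <;> simp [h]
  have hq0 : 0 ≤ q := by
    rw [hq]; exact div_nonneg (sum_nonneg fun _ _ => sum_nonneg fun _ _ => hf0 _ _) (by positivity)
  have hB0 : 0 ≤ B := by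
    rw [hB]; exact div_nonneg (sum_nonneg fun _ _ => sq_nonneg _) (by positivity)
  have hE : ∀ i j : Fin k, i < j → ∑ r : Fin k → E, f (r i) (r j) = M ^ k * q := by
    intro i j h
    have := wc_avg2 i j h.ne f
    rw [hq]; field_simp; linarith
  have hexp : ∑ r : Fin k → E, (f (r i) (r j) - q) * (f (r l) (r o) - q)
      = ∑ r : Fin k → E, f (r i) (r j) * f (r l) (r o) - M ^ k * q ^ 2 := by
    have : ∀ r : Fin k → E, (f (r i) (r j) - q) * (f (r l) (r o) - q)
      = f (r i) (r j) * f (r l) (r o) - f (r i) (r j) * q - f (r l) (r o) * q + q ^ 2 := by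
      intro r; ring
    simp only [this, sum_add_distrib, sum_sub_distrib, ← sum_mul, hE i j hp, hE l o hp']
    simp [← hM]; ring
  rw [hexp]
  have h3 : ∀ x y z : Fin k, x ≠ y → x ≠ z → y ≠ z →
      ∑ r : Fin k → E, f (r x) (r y) * f (r x) (r z) = M ^ k * B := by
    intro x y z hxy hxz hyz
    have := wc_avg3 x y z hxy hxz hyz (fun a b c => f a b * f a c)
    simp only [← Finset.mul_sum, ← Finset.sum_mul, ← pow_two] at this
    rw [hB]; field_simp; linarith
  have hMk : 0 < M ^ k := by positivity
  have hsq : 0 ≤ M ^ k * q ^ 2 := by positivity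
  suffices h : ∑ r : Fin k → E, f (r i) (r j) * f (r l) (r o) ≤ M ^ k * q ^ 2 +
      M ^ k * ((if (i, j) = (l, o) then q else 0)
        + ((if i = l then B else 0) + (if i = o then B else 0)
         + (if j = l then B else 0) + (if j = o then B else 0))) by linarith
  have key : ∀ t : ℝ, ∀ c : ℝ, ∑ r : Fin k → E, f (r i) (r j) * f (r l) (r o) = M ^ k * t →
     t ≤ q ^ 2 + c → ∑ r : Fin k → E, f (r i) (r j) * f (r l) (r o) ≤ M ^ k * q ^ 2 + M ^ k * c := by
    intro t c h1 h2
    rw [h1, ← mul_add]; gcongr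
  have hq2 := sq_nonneg q
  by_cases h1 : i = l
  · subst h1
    by_cases h2 : j = o
    · subst h2
      apply key q
      · rw [← hE i j hp]
        refine sum_congr rfl fun r _ => ?_
        rcases h01 (r i) (r j) with h | h <;> simp [h]
      · simp; split_ifs <;> linarith
    · apply key B
      · exact h3 i j o hp.ne hp'.ne h2
      · simp [h2]; split_ifs <;> linarith
  · by_cases h2 : j = o
    · subst h2
      apply key B
      · rw [← h3 j i l hp.ne' hp'.ne' h1]
        refine sum_congr rfl fun r _ => ?_
        rw [hs (r i), hs (r l)]
      · simp [h1]; split_ifs <;> linarith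
    · by_cases h4 : i = o
      · subst h4
        apply key B
        · rw [← h3 i j l hp.ne hp'.ne' (hp'.trans hp).ne']
          refine sum_congr rfl fun r _ => ?_
          rw [hs (r l)]
        · simp [h1, h2]; split_ifs <;> linarith
      · by_cases h5 : j = l
        · subst h5
          apply key B
          · rw [← h3 j i o hp.ne' hp'.ne (hp.trans hp').ne]
            refine sum_congr rfl fun r _ => ?_
            rw [hs (r i)]
          · simp [h1, h2, h4]
            positivity
        · apply key (q ^ 2)
          · have := wc_avg4 i j l o hp.ne h1 h4 h5 h2 hp'.ne f
            rw [hq]; field_simp; linarith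
          · simp [h1, h2, h4, h5]

lemma wc_var {E : Type*} [Fintype E] {k : ℕ} (f : E → E → ℝ) (hs : ∀ a b, f a b = f b a)
    (h01 : ∀ a b, f a b = 0 ∨ f a b = 1) (hm : 0 < Fintype.card E) (q B : ℝ)
    (hq : q = (∑ a, ∑ b, f a b) / (Fintype.card E : ℝ) ^ 2)
    (hB : B = (∑ a, (∑ b, f a b) ^ 2) / (Fintype.card E : ℝ) ^ 3) :
    ∑ r : Fin k → E, ((∑ p ∈ (univ : Finset (Fin k × Fin k)).filter (fun p => p.1 < p.2),
      f (r p.1) (r p.2)) - (k.choose 2 : ℝ) * q) ^ 2 ≤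
      (Fintype.card E : ℝ) ^ k * (k ^ 2 * q + 4 * k ^ 3 * B) := by
  have hf0 : ∀ a b, 0 ≤ f a b := fun a b => by rcases h01 a b with h | h <;> simp [h]
  have hq0 : 0 ≤ q := by
    rw [hq]; exact div_nonneg (sum_nonneg fun _ _ => sum_nonneg fun _ _ => hf0 _ _) (by positivity)
  have hB0 : 0 ≤ B := by
    rw [hB]; exact div_nonneg (sum_nonneg fun _ _ => sq_nonneg _) (by positivity)
  set P := (univ : Finset (Fin k × Fin k)).filter (fun p => p.1 < p.2) with hP
  have h1 : ∀ r : Fin k → E, (∑ p ∈ P, f (r p.1) (r p.2)) - (k.choose 2 : ℝ) * q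
      = ∑ p ∈ P, (f (r p.1) (r p.2) - q) := by
    intro r
    rw [sum_sub_distrib]; simp [hP, wc_card]
  simp only [h1, pow_two (∑ p ∈ P, _), Finset.sum_mul_sum]
  rw [Finset.sum_comm]
  have h2 : ∀ p ∈ P, ∑ r : Fin k → E, ∑ p' ∈ P,
      (f (r p.1) (r p.2) - q) * (f (r p'.1) (r p'.2) - q) ≤ ∑ p' ∈ P,
      (Fintype.card E : ℝ) ^ k * ((if p = p' then q else 0)
        + ((if p.1 = p'.1 then B else 0) + (if p.1 = p'.2 then B else 0)
         + (if p.2 = p'.1 then B else 0) + (if p.2 = p'.2 then B else 0))) := by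
    intro p hp
    rw [Finset.sum_comm]
    refine sum_le_sum fun p' hp' => ?_
    exact wc_cov f hs h01 hm q B hq hB p p' (by simpa [hP] using hp) (by simpa [hP] using hp')
  refine (sum_le_sum h2).trans ?_
  have hnn : ∀ p p' : Fin k × Fin k, 0 ≤ (Fintype.card E : ℝ) ^ k * ((if p = p' then q else 0)
        + ((if p.1 = p'.1 then B else 0) + (if p.1 = p'.2 then B else 0)
         + (if p.2 = p'.1 then B else 0) + (if p.2 = p'.2 then B else 0))) := by
    intro p p'; positivity
  refine (sum_le_sum fun p _ => sum_le_univ_sum_of_nonneg (hnn p)).trans ?_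
  refine (sum_le_univ_sum_of_nonneg fun p => sum_nonneg fun p' _ => hnn p p').trans ?_
  apply le_of_eq
  simp only [← Finset.mul_sum, Finset.sum_add_distrib]
  congr 1
  have s1 : ∀ x : Fin k, ∑ p' : Fin k × Fin k, (if x = p'.1 then B else 0) = k * B := by
    intro x; rw [Fintype.sum_prod_type_right]; simp
  have s2 : ∀ x : Fin k, ∑ p' : Fin k × Fin k, (if x = p'.2 then B else 0) = k * B := by
    intro x; rw [Fintype.sum_prod_type]; simp
  simp only [s1, s2, Finset.sum_ite_eq, Finset.sum_const, Finset.card_univ,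
    Fintype.card_fin, nsmul_eq_mul, Finset.mem_univ, if_true, Fintype.card_prod]
  push_cast
  ring

lemma wc_cheb {Ω : Type*} [Fintype Ω] (Z : Ω → ℝ) (h γ N : ℝ) (hN : (Fintype.card Ω : ℝ) = N)
    (hh0 : 0 < h) (hv : ∑ r, (Z r) ^ 2 ≤ N * (γ * h ^ 2)) :
    (1 - γ) * N ≤ ((univ.filter (fun r => |Z r| ≤ h)).card : ℝ) := by
  have hgb := Finset.card_filter_add_card_filter_not (s := (univ : Finset Ω)) (fun r => |Z r| ≤ h)
  have hgb' : ((univ.filter (fun r => |Z r| ≤ h)).card : ℝ)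
      + ((univ.filter (fun r => ¬ |Z r| ≤ h)).card : ℝ) = N := by
    rw [← hN, ← Finset.card_univ]
    exact_mod_cast hgb
  have hbad : ((univ.filter (fun r => ¬ |Z r| ≤ h)).card : ℝ) * h ^ 2 ≤ ∑ r, (Z r) ^ 2 := by
    calc ((univ.filter (fun r => ¬ |Z r| ≤ h)).card : ℝ) * h ^ 2
        = ∑ r ∈ univ.filter (fun r => ¬ |Z r| ≤ h), h ^ 2 := by simp
      _ ≤ ∑ r ∈ univ.filter (fun r => ¬ |Z r| ≤ h), (Z r) ^ 2 := by
          refine Finset.sum_le_sum fun r hr => ?_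
          have : h < |Z r| := by simpa using hr
          rw [← sq_abs (Z r)]; gcongr
      _ ≤ _ := Finset.sum_le_univ_sum_of_nonneg fun r => sq_nonneg _
  have hbad2 : ((univ.filter (fun r => ¬ |Z r| ≤ h)).card : ℝ) * h ^ 2 ≤ (N * γ) * h ^ 2 := by
    rw [mul_assoc]; exact hbad.trans hv
  have hbad3 := le_of_mul_le_mul_right hbad2 (by positivity)
  linarith

lemma wc_total {V : Type*} [Fintype V] [DecidableEq V] (G : SimpleGraph V) [DecidableRel G.Adj]
    (S : Finset (Sym2 (Sym2 V)))
    (hS : ∀ w ∈ S, ¬ w.IsDiag ∧ (∀ e ∈ w, e ∈ G.edgeFinset) ∧ ∃ v : V, ∀ e ∈ w, v ∈ e) :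
    ∑ a : G.edgeFinset, ∑ b : G.edgeFinset,
      (if s((a : Sym2 V), (b : Sym2 V)) ∈ S then (1 : ℝ) else 0) = 2 * S.card := by
  rw [← Fintype.sum_prod_type' (f := fun a b : G.edgeFinset =>
    (if s((a : Sym2 V), (b : Sym2 V)) ∈ S then (1 : ℝ) else 0))]
  rw [Finset.sum_boole]
  have h := Finset.card_eq_sum_card_fiberwise (s := (univ : Finset (G.edgeFinset × G.edgeFinset)).filter
    (fun x => s((x.1 : Sym2 V), (x.2 : Sym2 V)) ∈ S)) (t := S)
    (f := fun x => s((x.1 : Sym2 V), (x.2 : Sym2 V))) (by intro x hx; simpa using hx)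
  rw [h, Finset.sum_congr rfl (g := fun _ => 2)]
  · simp [mul_comm]
  · intro w hw
    obtain ⟨h1, h2, -⟩ := hS w hw
    induction w using Sym2.ind with
    | _ e e' =>
    have he : e ∈ G.edgeFinset := h2 e (by simp)
    have he' : e' ∈ G.edgeFinset := h2 e' (by simp)
    have hne : e ≠ e' := by simpa using h1
    have : (((univ : Finset (G.edgeFinset × G.edgeFinset)).filter
        (fun x => s((x.1 : Sym2 V), (x.2 : Sym2 V)) ∈ S)).filter
        (fun x => s((x.1 : Sym2 V), (x.2 : Sym2 V)) = s(e, e')))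
        = {(⟨e, he⟩, ⟨e', he'⟩), (⟨e', he'⟩, ⟨e, he⟩)} := by
      ext ⟨⟨x, hx⟩, ⟨y, hy⟩⟩
      simp only [mem_filter, mem_univ, true_and, mem_insert, mem_singleton, Prod.mk.injEq,
        Subtype.mk.injEq, Sym2.eq_iff]
      constructor
      · exact fun h => h.2
      · rintro (⟨rfl, rfl⟩ | ⟨rfl, rfl⟩)
        · simp [hw]
        · rw [Sym2.eq_swap]; simp [hw]
    rw [this, Finset.card_pair]
    simp [hne]

lemma wc_two_choose (d : ℕ) : 2 * d.choose 2 = d * d - d := by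
  rw [← Nat.mul_sub_one, Nat.choose_two_right, Nat.mul_div_cancel' (Nat.even_mul_pred_self d).two_dvd]

lemma wc_le {V : Type*} [Fintype V] [DecidableEq V] (G : SimpleGraph V) [DecidableRel G.Adj]
    (S : Finset (Sym2 (Sym2 V)))
    (hS : ∀ w ∈ S, ¬ w.IsDiag ∧ (∀ e ∈ w, e ∈ G.edgeFinset) ∧ ∃ v : V, ∀ e ∈ w, v ∈ e) :
    S.card ≤ ∑ v : V, (G.degree v).choose 2 := by
  have h := wc_total G S hS
  rw [← Fintype.sum_prod_type' (f := fun a b : G.edgeFinset =>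
    (if s((a : Sym2 V), (b : Sym2 V)) ∈ S then (1 : ℝ) else 0)), Finset.sum_boole] at h
  have h' : ((univ : Finset (G.edgeFinset × G.edgeFinset)).filter
    (fun x => s((x.1 : Sym2 V), (x.2 : Sym2 V)) ∈ S)).card = 2 * S.card := by exact_mod_cast h
  have h2 : ((univ : Finset (G.edgeFinset × G.edgeFinset)).filter
    (fun x => s((x.1 : Sym2 V), (x.2 : Sym2 V)) ∈ S)).card ≤
      (univ.biUnion (fun v : V => (G.incidenceFinset v).offDiag)).card := by
    apply Finset.card_le_card_of_injOn (fun x => ((x.1 : Sym2 V), (x.2 : Sym2 V)))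
    · rintro ⟨⟨x, hx⟩, ⟨y, hy⟩⟩ hxy
      simp only [coe_filter, mem_univ, true_and, Set.mem_ofPred_eq] at hxy
      obtain ⟨h1, -, v, hv⟩ := hS _ hxy
      simp only [SimpleGraph.mem_edgeFinset] at hx hy
      simp only [coe_biUnion, Set.mem_iUnion, mem_coe, mem_offDiag, mem_univ,
        SimpleGraph.mem_incidenceFinset, SimpleGraph.incidenceSet, Set.mem_ofPred_eq]
      exact ⟨v, trivial, ⟨hx, hv x (by simp)⟩, ⟨hy, hv y (by simp)⟩, by simpa using h1⟩
    · rintro ⟨⟨x, hx⟩, ⟨y, hy⟩⟩ _ ⟨⟨x', hx'⟩, ⟨y', hy'⟩⟩ _ h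
      simpa using h
  have h3 := h2.trans Finset.card_biUnion_le
  rw [h'] at h3
  simp only [Finset.offDiag_card, SimpleGraph.card_incidenceFinset_eq_degree, ← wc_two_choose,
    ← Finset.mul_sum] at h3
  omega

lemma wc_deg {V : Type*} [Fintype V] [DecidableEq V] (G : SimpleGraph V) [DecidableRel G.Adj]
    (v : V) : ((G.degree v - 1 : ℕ) : ℝ) ≤
      Real.sqrt (2 * ((∑ v : V, (G.degree v).choose 2 : ℕ) : ℝ)) := by
  apply Real.le_sqrt_of_sq_le
  have h1 : (G.degree v).choose 2 ≤ ∑ v : V, (G.degree v).choose 2 :=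
    Finset.single_le_sum (f := fun v => (G.degree v).choose 2) (fun _ _ => Nat.zero_le _) (mem_univ v)
  have h2 := wc_two_choose (G.degree v)
  rw [← Nat.mul_sub_one] at h2
  have h3 : (G.degree v - 1) ^ 2 ≤ G.degree v * (G.degree v - 1) := by
    rw [pow_two]; exact Nat.mul_le_mul_right _ (Nat.sub_le _ _)
  have : (G.degree v - 1) ^ 2 ≤ 2 * ∑ v : V, (G.degree v).choose 2 := by omega
  exact_mod_cast this

lemma wc_D {V : Type*} [Fintype V] [DecidableEq V] (G : SimpleGraph V) [DecidableRel G.Adj]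
    (S : Finset (Sym2 (Sym2 V)))
    (hS : ∀ w ∈ S, ¬ w.IsDiag ∧ (∀ e ∈ w, e ∈ G.edgeFinset) ∧ ∃ v : V, ∀ e ∈ w, v ∈ e)
    (a : G.edgeFinset) :
    ∑ b : G.edgeFinset, (if s((a : Sym2 V), (b : Sym2 V)) ∈ S then (1 : ℝ) else 0) ≤
      2 * Real.sqrt (2 * ((∑ v : V, (G.degree v).choose 2 : ℕ) : ℝ)) := by
  rw [Finset.sum_boole]
  obtain ⟨a, ha⟩ := a
  induction a using Sym2.ind with
  | _ u v =>
  have h2 : ((univ : Finset G.edgeFinset).filter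
    (fun x : G.edgeFinset => s(s(u, v), (x : Sym2 V)) ∈ S)).card ≤
      ((G.incidenceFinset u).erase s(u, v) ∪ (G.incidenceFinset v).erase s(u, v)).card := by
    apply Finset.card_le_card_of_injOn (fun x : G.edgeFinset => (x : Sym2 V))
    · rintro ⟨x, hx⟩ hxy
      simp only [coe_filter, mem_univ, true_and, Set.mem_ofPred_eq] at hxy
      obtain ⟨h1, -, z, hz⟩ := hS _ hxy
      have hz1 : z ∈ s(u, v) := hz _ (by simp)
      have hz2 : z ∈ x := hz _ (by simp)
      have hne : x ≠ s(u, v) := fun h => h1 (by simp [h])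
      simp only [SimpleGraph.mem_edgeFinset] at hx
      simp only [mem_coe, mem_union, mem_erase, SimpleGraph.mem_incidenceFinset,
        SimpleGraph.incidenceSet, Set.mem_ofPred_eq]
      rcases Sym2.mem_iff.1 hz1 with rfl | rfl
      · exact Or.inl ⟨hne, hx, hz2⟩
      · exact Or.inr ⟨hne, hx, hz2⟩
    · exact Subtype.val_injective.injOn
  have hav : s(u, v) ∈ G.edgeSet := by simpa using ha
  have h3 := h2.trans (Finset.card_union_le _ _)
  rw [Finset.card_erase_of_mem (by simp only [SimpleGraph.mem_incidenceFinset,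
        SimpleGraph.incidenceSet, Set.mem_ofPred_eq]; exact ⟨hav, by simp⟩),
      Finset.card_erase_of_mem (by simp only [SimpleGraph.mem_incidenceFinset,
        SimpleGraph.incidenceSet, Set.mem_ofPred_eq]; exact ⟨hav, by simp⟩),
      SimpleGraph.card_incidenceFinset_eq_degree, SimpleGraph.card_incidenceFinset_eq_degree] at h3
  have h4 : (((univ : Finset G.edgeFinset).filter
    (fun x : G.edgeFinset => s(s(u, v), (x : Sym2 V)) ∈ S)).card : ℝ) ≤
      ((G.degree u - 1 : ℕ) : ℝ) + ((G.degree v - 1 : ℕ) : ℝ) := by exact_mod_cast h3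
  have := wc_deg G u
  have := wc_deg G v
  linarith

lemma wc_W {V : Type*} [Fintype V] [DecidableEq V] (G : SimpleGraph V) [DecidableRel G.Adj] :
    ∑ v : V, (G.degree v).choose 2 ≤ G.edgeFinset.card ^ 2 := by
  have h : 2 * ∑ v : V, (G.degree v).choose 2 ≤ 2 * G.edgeFinset.card ^ 2 := by
    calc 2 * ∑ v : V, (G.degree v).choose 2 = ∑ v : V, (G.degree v * G.degree v - G.degree v) := by
          rw [Finset.mul_sum]; simp only [wc_two_choose]
      _ ≤ ∑ v : V, G.degree v * G.edgeFinset.card := by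
          refine Finset.sum_le_sum fun v _ => (Nat.sub_le _ _).trans (Nat.mul_le_mul_left _ ?_)
          rw [← SimpleGraph.card_incidenceFinset_eq_degree]
          exact Finset.card_le_card (by
            intro e he
            simp only [SimpleGraph.mem_incidenceFinset] at he
            simpa using he.1)
      _ = 2 * G.edgeFinset.card ^ 2 := by
          rw [← Finset.sum_mul, SimpleGraph.sum_degrees_eq_twice_card_edges]; ring
  omega

/-- final numeric estimate: variance bound divided by the squared deviation -/
lemma wc_num (m w k γ q B : ℝ) (hm : 0 < m) (hw : 0 < w) (hwm : w ≤ m) (hγ : 0 < γ) (hγ1 : γ < 1)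
    (hk : 1000 * m / (γ ^ 3 * w) ≤ k) (hq : q ≤ 2 * w ^ 2 / m ^ 2)
    (hB : B ≤ 8 * w ^ 3 / m ^ 3) :
    k ^ 2 * q + 4 * k ^ 3 * B ≤ γ * (γ * w ^ 2 * (k * (k - 1)) / m ^ 2) ^ 2 := by
  have hγ3 : γ ^ 3 ≤ 1 := pow_le_one₀ hγ.le hγ1.le
  rw [div_le_iff₀ (by positivity)] at hk
  have hk0 : 0 < k := by
    by_contra h
    push Not at h
    have : k * (γ ^ 3 * w) ≤ 0 := mul_nonpos_of_nonpos_of_nonneg h (by positivity)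
    linarith
  have hkw : 1000 * m ≤ k * w := by
    refine hk.trans ?_
    have : γ ^ 3 * w ≤ 1 * w := by gcongr
    nlinarith
  have hk2 : 2 ≤ k := by
    by_contra h
    push Not at h
    nlinarith
  have hk1 : k / 2 ≤ k - 1 := by linarith
  have e1 : k ^ 2 * q + 4 * k ^ 3 * B ≤ 34 * k ^ 3 * w ^ 3 / m ^ 3 := by
    have a1 : k ^ 2 * q ≤ 2 * k ^ 3 * w ^ 3 / m ^ 3 := by
      calc k ^ 2 * q ≤ k ^ 2 * (2 * w ^ 2 / m ^ 2) := by gcongr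
        _ = 2 * k ^ 2 * w ^ 2 * m / m ^ 3 := by field_simp
        _ ≤ 2 * k ^ 2 * w ^ 2 * (k * w) / m ^ 3 := by gcongr; linarith
        _ = _ := by ring
    have a2 : 4 * k ^ 3 * B ≤ 32 * k ^ 3 * w ^ 3 / m ^ 3 := by
      calc 4 * k ^ 3 * B ≤ 4 * k ^ 3 * (8 * w ^ 3 / m ^ 3) := by gcongr
        _ = _ := by ring
    calc _ ≤ _ := add_le_add a1 a2
      _ = _ := by ring
  refine e1.trans ?_
  calc 34 * k ^ 3 * w ^ 3 / m ^ 3 = (34 * m) * (k ^ 3 * w ^ 3) / m ^ 4 := by field_simp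
    _ ≤ (k * (γ ^ 3 * w) / 4) * (k ^ 3 * w ^ 3) / m ^ 4 := by gcongr; linarith
    _ = γ * (γ * w ^ 2 * (k * (k / 2)) / m ^ 2) ^ 2 := by field_simp; norm_num
    _ ≤ _ := by gcongr

/-- Concentration via Chebyshev: there is an absolute constant `c' > 0` such that for
any graph with `m` edges and `W ≥ m` wedges, any fixed nonempty set `S` of wedges, any
`γ > 0`, and any `k ≥ c'm/(γ³√W)` i.i.d. uniform random edges, the count `X` of wedges
of `S` formed by the sample satisfies `|X − E[X]| ≤ (γW/|S|)E[X]` with probability at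
least `1 − γ`. -/
theorem wedge_count_concentration :
    ∃ c' : ℝ, 0 < c' ∧
      ∀ (V : Type) [Fintype V] [DecidableEq V] (G : SimpleGraph V) [DecidableRel G.Adj]
        (m W : ℕ), m = G.edgeFinset.card → 0 < m →
        W = ∑ v : V, (G.degree v).choose 2 → m ≤ W →
        ∀ (S : Finset (Sym2 (Sym2 V))), S.Nonempty →
        (∀ w ∈ S, ¬ w.IsDiag ∧ (∀ e ∈ w, e ∈ G.edgeFinset) ∧ ∃ v : V, ∀ e ∈ w, v ∈ e) →
        ∀ (γ : ℝ), 0 < γ →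
        ∀ (k : ℕ), c' * (m : ℝ) / (γ ^ 3 * Real.sqrt W) ≤ (k : ℝ) →
        1 - γ ≤
          ((Finset.univ.filter (fun r : Fin k → G.edgeFinset =>
            |((Finset.univ.filter (fun p : Fin k × Fin k =>
                p.1 < p.2 ∧ s((r p.1 : Sym2 V), (r p.2 : Sym2 V)) ∈ S)).card : ℝ)
              - (k.choose 2 : ℝ) * (2 * (S.card : ℝ) / (m : ℝ) ^ 2)|
            ≤ (γ * (W : ℝ) / (S.card : ℝ)) *
              ((k.choose 2 : ℝ) * (2 * (S.card : ℝ) / (m : ℝ) ^ 2)))).card : ℝ)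
            / (m : ℝ) ^ k := by
  refine ⟨1000, by norm_num, ?_⟩
  intro V _ _ G _ m W hm hm0 hW hmW S hSne hS γ hγ k hk
  rcases le_or_gt 1 γ with hγ1 | hγ1
  · exact le_trans (by linarith) (by positivity : (0 : ℝ) ≤ _)
  set f : G.edgeFinset → G.edgeFinset → ℝ := fun a b =>
    if s((a : Sym2 V), (b : Sym2 V)) ∈ S then (1 : ℝ) else 0 with hf
  have hcard : Fintype.card G.edgeFinset = m := by rw [Fintype.card_coe, hm]
  have hmR : (0 : ℝ) < m := by exact_mod_cast hm0
  have hW0 : (0 : ℝ) < W := by exact_mod_cast lt_of_lt_of_le hm0 hmW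
  have hw0 : 0 < Real.sqrt W := Real.sqrt_pos.2 hW0
  have hwsq : Real.sqrt W ^ 2 = W := Real.sq_sqrt hW0.le
  have hwm : Real.sqrt W ≤ m := by
    rw [Real.sqrt_le_left hmR.le]
    have := wc_W G
    rw [← hW, ← hm] at this
    exact_mod_cast this
  have hSW : (S.card : ℝ) ≤ W := by
    have := wc_le G S hS
    rw [← hW] at this
    exact_mod_cast this
  have hS0 : (0 : ℝ) < S.card := by exact_mod_cast hSne.card_pos
  have htot : ∑ a, ∑ b, f a b = 2 * S.card := wc_total G S hS
  have hD : ∀ a, ∑ b, f a b ≤ 4 * Real.sqrt W := by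
    intro a
    have h := wc_D G S hS a
    rw [← hW, Real.sqrt_mul (by norm_num)] at h
    have h2 : Real.sqrt 2 ≤ 2 := by
      rw [Real.sqrt_le_left (by norm_num)]; norm_num
    calc ∑ b, f a b ≤ _ := h
      _ ≤ 2 * (2 * Real.sqrt W) := by gcongr
      _ = _ := by ring
  have hD0 : ∀ a, 0 ≤ ∑ b, f a b := fun a => Finset.sum_nonneg fun b _ => by
    simp only [hf]; split_ifs <;> norm_num
  set q : ℝ := 2 * (S.card : ℝ) / (m : ℝ) ^ 2 with hq
  set B : ℝ := (∑ a, (∑ b, f a b) ^ 2) / (m : ℝ) ^ 3 with hB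
  have hqle : q ≤ 2 * Real.sqrt W ^ 2 / (m : ℝ) ^ 2 := by
    rw [hq, hwsq]; gcongr
  have hBle : B ≤ 8 * Real.sqrt W ^ 3 / (m : ℝ) ^ 3 := by
    rw [hB]
    gcongr
    calc ∑ a, (∑ b, f a b) ^ 2 ≤ ∑ a, (4 * Real.sqrt W) * (∑ b, f a b) := by
          refine Finset.sum_le_sum fun a _ => ?_
          rw [pow_two]; exact mul_le_mul_of_nonneg_right (hD a) (hD0 a)
      _ = 4 * Real.sqrt W * (2 * S.card) := by rw [← Finset.mul_sum, htot]
      _ ≤ 4 * Real.sqrt W * (2 * W) := by gcongr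
      _ = 4 * Real.sqrt W * (2 * Real.sqrt W ^ 2) := by rw [hwsq]
      _ = _ := by ring
  have hvar := wc_var (k := k) f (fun a b => by simp only [hf]; rw [Sym2.eq_swap])
    (fun a b => by simp only [hf]; split_ifs <;> simp) (by rw [hcard]; exact hm0) q B
    (by rw [hcard, htot]) (by rw [hcard])
  rw [hcard] at hvar
  have hnum := wc_num m (Real.sqrt W) k γ q B hmR hw0 hwm hγ hγ1 hk hqle hBle
  have hch : (k.choose 2 : ℝ) = k * (k - 1) / 2 := Nat.cast_choose_two ℝ k
  set h : ℝ := (γ * (W : ℝ) / (S.card : ℝ)) * ((k.choose 2 : ℝ) * q) with hh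
  have hheq : γ * Real.sqrt W ^ 2 * ((k : ℝ) * (k - 1)) / (m : ℝ) ^ 2 = h := by
    rw [hh, hq, hch, hwsq]; field_simp
  rw [hheq] at hnum
  have hMk : (0 : ℝ) < (m : ℝ) ^ k := by positivity
  have hX : ∀ r : Fin k → G.edgeFinset, ((Finset.univ.filter (fun p : Fin k × Fin k =>
      p.1 < p.2 ∧ s((r p.1 : Sym2 V), (r p.2 : Sym2 V)) ∈ S)).card : ℝ) =
      ∑ p ∈ (univ : Finset (Fin k × Fin k)).filter (fun p => p.1 < p.2), f (r p.1) (r p.2) := by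
    intro r
    simp only [hf]
    rw [Finset.sum_boole, Finset.filter_filter]
  simp only [hX]
  rw [le_div_iff₀ hMk]
  have hh0 : 0 < h := by
    have hk2 : (0 : ℝ) < k - 1 := by
      rw [div_le_iff₀ (by positivity)] at hk
      have hγ3 : γ ^ 3 ≤ 1 := pow_le_one₀ hγ.le hγ1.le
      by_contra hc
      have hc' : (k : ℝ) ≤ 1 := by linarith
      have : (k : ℝ) * (γ ^ 3 * Real.sqrt W) ≤ 1 * (1 * m) := by gcongr
      linarith
    have hk3 : (0 : ℝ) < k := by linarith
    rw [← hheq]; positivity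
  exact wc_cheb (fun r : Fin k → G.edgeFinset =>
    (∑ p ∈ (univ : Finset (Fin k × Fin k)).filter (fun p => p.1 < p.2), f (r p.1) (r p.2))
      - (k.choose 2 : ℝ) * q) h γ ((m : ℝ) ^ k)
    (by rw [Fintype.card_fun, hcard, Fintype.card_fin]; push_cast; rfl) hh0
    (hvar.trans (mul_le_mul_of_nonneg_left hnum hMk.le))
end
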